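/- Under the stated hypotheses on G, the eigenvector x satisfies x_k > x_0 and x_k > x_2. -/

import Mathlib

open Matrix

/-- The signless Laplacian `Q(G) = D(G) + A(G)` of a finite simple graph `G`. -/
noncomputable def signlessLaplacian {V : Type*} [Fintype V] (G : SimpleGraph V) :
    Matrix V V ℝ :=
  letI := Classical.decEq V
  letI : DecidableRel G.Adj := Classical.decRel _
  Matrix.diagonal (fun v => (G.degree v : ℝ)) + G.adjMatrix ℝ

/-- The `Q`-index of `G`: the largest eigenvalue of the signless Laplacian `Q(G)`. -/
noncomputable def qIndex {V : Type*} [Fintype V] (G : SimpleGraph V) : ℝ :=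
  letI := Classical.decEq V
  sSup (spectrum ℝ (signlessLaplacian G))

/-! The eigenvalue equation at `v` reads `deg v * x v + ∑ z ∈ N(v), x z = q * x v`. It forces
`deg v ≤ q` wherever `x v > 0`. If `N(u) ⊂ N(w)`, then `deg u < deg w` and the sum of `x` over
`N(u)` is at most that over `N(w)`, so comparing the equations at `u` and `w` gives
`(q - deg u) * x u < (q - deg u) * x w`. The neighborhoods of `v_0` and `v_2` both lie strictly
inside that of `v_k`. -/

section SignlessLaplacian

variable {V : Type*} [Fintype V] {G : SimpleGraph V} {q : ℝ} {x : V → ℝ}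

theorem signlessLaplacian_mulVec_apply [DecidableRel G.Adj] (x : V → ℝ) (v : V) :
    (signlessLaplacian G).mulVec x v = G.degree v * x v + ∑ z ∈ G.neighborFinset v, x z := by
  simp only [signlessLaplacian, add_mulVec, Pi.add_apply, mulVec_diagonal,
    SimpleGraph.adjMatrix_mulVec_apply]
  congr!

theorem degree_mul_add_sum_neighborFinset_eq [DecidableRel G.Adj]
    (heig : (signlessLaplacian G).mulVec x = q • x) (v : V) :
    G.degree v * x v + ∑ z ∈ G.neighborFinset v, x z = q * x v := by
  rw [← signlessLaplacian_mulVec_apply, heig, Pi.smul_apply, smul_eq_mul]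

theorem degree_le_of_signlessLaplacian_mulVec_eq_smul [DecidableRel G.Adj] (hx : 0 ≤ x)
    (heig : (signlessLaplacian G).mulVec x = q • x) {v : V} (hv : 0 < x v) :
    (G.degree v : ℝ) ≤ q := by
  refine le_of_mul_le_mul_right ?_ hv
  rw [← degree_mul_add_sum_neighborFinset_eq heig v]
  exact le_add_of_nonneg_right (Finset.sum_nonneg fun z _ => hx z)

theorem stmt_12_general (hx : 0 ≤ x) (heig : (signlessLaplacian G).mulVec x = q • x)
    {u w : V} (hw : 0 < x w) (huw : G.neighborSet u ⊂ G.neighborSet w) : x u < x w := by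
  classical
  by_contra! hle
  have degree_le : (G.degree u : ℝ) ≤ q :=
    degree_le_of_signlessLaplacian_mulVec_eq_smul hx heig (hw.trans_le hle)
  have neighborFinset_ssubset : G.neighborFinset u ⊂ G.neighborFinset w :=
    Set.toFinset_ssubset_toFinset.mpr huw
  have degree_lt : (G.degree u : ℝ) < G.degree w :=
    Nat.cast_lt.mpr (Finset.card_lt_card neighborFinset_ssubset)
  have sum_le : ∑ z ∈ G.neighborFinset u, x z ≤ ∑ z ∈ G.neighborFinset w, x z :=
    Finset.sum_le_sum_of_subset_of_nonneg neighborFinset_ssubset.subset fun z _ _ => hx z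
  have mul_lt : (q - G.degree u) * x u < (q - G.degree u) * x w :=
    calc (q - G.degree u) * x u = ∑ z ∈ G.neighborFinset u, x z := by
          linarith [degree_mul_add_sum_neighborFinset_eq heig u]
      _ ≤ ∑ z ∈ G.neighborFinset w, x z := sum_le
      _ = (q - G.degree w) * x w := by
          linarith [degree_mul_add_sum_neighborFinset_eq heig w]
      _ < (q - G.degree u) * x w := by gcongr
  exact mul_lt.not_ge (mul_le_mul_of_nonneg_left hle (sub_nonneg.mpr degree_le))

end SignlessLaplacian

theorem pair_ssubset_insert {α : Type*} {a b c : α} {s : Set α} (hb : b ∈ s) (hc : c ∈ s)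
    (hca : c ≠ a) (hcb : c ≠ b) : {a, b} ⊂ insert a s :=
  Set.ssubset_iff_exists.mpr
    ⟨Set.insert_subset_insert (Set.singleton_subset_iff.mpr hb), c, Or.inr hc,
      by simp [hca, hcb]⟩

/-- for the maximal outer-planar graph of type `D_2` with `Δ = n - 3`,
the Perron eigenvector satisfies `x_k > x_0` and `x_k > x_2`. -/
theorem stmt_12 (n k : ℕ) (hn : 8 ≤ n) (hk1 : 4 ≤ k) (hk2 : k ≤ n - 3)
    (G : SimpleGraph (Fin n))
    (h0 : G.neighborSet ⟨0, by omega⟩ = {⟨1, by omega⟩, ⟨n - 1, by omega⟩})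
    (h1 : G.neighborSet ⟨1, by omega⟩ =
      {⟨0, by omega⟩, ⟨2, by omega⟩, ⟨3, by omega⟩, ⟨k, by omega⟩, ⟨n - 1, by omega⟩})
    (h2 : G.neighborSet ⟨2, by omega⟩ = {⟨1, by omega⟩, ⟨3, by omega⟩})
    (hlast : G.neighborSet ⟨n - 1, by omega⟩ =
      {⟨0, by omega⟩, ⟨1, by omega⟩, ⟨k, by omega⟩, ⟨n - 2, by omega⟩})
    (hk' : G.neighborSet ⟨k, by omega⟩ =
      insert ⟨1, by omega⟩ {u : Fin n | 3 ≤ u.val ∧ u ≠ ⟨k, by omega⟩})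
    (x : Fin n → ℝ) (hpos : ∀ i, 0 < x i)
    (heig : (signlessLaplacian G).mulVec x = qIndex G • x) :
    x ⟨0, by omega⟩ < x ⟨k, by omega⟩ ∧ x ⟨2, by omega⟩ < x ⟨k, by omega⟩ := by
  have mem_three : (⟨3, by omega⟩ : Fin n) ∈ {u : Fin n | 3 ≤ u.val ∧ u ≠ ⟨k, by omega⟩} := by
    grind
  have mem_last : (⟨n - 1, by omega⟩ : Fin n) ∈ {u : Fin n | 3 ≤ u.val ∧ u ≠ ⟨k, by omega⟩} := by
    grind
  have h0k : G.neighborSet ⟨0, by omega⟩ ⊂ G.neighborSet ⟨k, by omega⟩ := by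
    rw [h0, hk']
    exact pair_ssubset_insert mem_last mem_three (by grind) (by grind)
  have h2k : G.neighborSet ⟨2, by omega⟩ ⊂ G.neighborSet ⟨k, by omega⟩ := by
    rw [h2, hk']
    exact pair_ssubset_insert mem_three mem_last (by grind) (by grind)
  have hx : 0 ≤ x := fun i => (hpos i).le
  exact ⟨stmt_12_general hx heig (hpos _) h0k, stmt_12_general hx heig (hpos _) h2k⟩
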